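/- For every ε with 0 < ε < 1/6, every λ ∈ (0,1], every graph H, and every positive integer z, there exists a constant C such that the following holds for all sufficiently large n: if m = 2z·m' with m' > Cn, then every graph G ∈ G(H, n, m, ε, λ) admits at least 0.99·(m!/(m'!)^{2z})^{e(H)} ordered partitions of its edge set into a sequence (G₁,…,G_{2z}) of edge-disjoint graphs, each partition splitting each bipartite graph G(V_i,V_j), ij ∈ E(H), into 2z sets of m' edges, such that every G_t belongs to G(H, n, m', ε, λ/2). -/

import Mathlib

open Finset

variable {k n : ℕ}

/-- Number of edges of `G ⊆ K_n^H` between class `i` restricted to `A` and class `j`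
restricted to `B`, counted as ordered pairs `(u, v) ∈ V_i × V_j`. -/
noncomputable def pairCountIn (G : SimpleGraph (Fin k × Fin n)) (i j : Fin k)
    (A B : Finset (Fin n)) : ℕ :=
  Nat.card {p : Fin n × Fin n // p.1 ∈ A ∧ p.2 ∈ B ∧ G.Adj (i, p.1) (j, p.2)}

/-- Number of edges of `G ⊆ K_n^H` between classes `V_i` and `V_j`. -/
noncomputable def pairCount (G : SimpleGraph (Fin k × Fin n)) (i j : Fin k) : ℕ :=
  Nat.card {p : Fin n × Fin n // G.Adj (i, p.1) (j, p.2)}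

/-- The density `d(A, B)` of the bipartite graph `G(V_i, V_j)` between `A ⊆ V_i`, `B ⊆ V_j`. -/
noncomputable def density (G : SimpleGraph (Fin k × Fin n)) (i j : Fin k)
    (A B : Finset (Fin n)) : ℝ :=
  (pairCountIn G i j A B : ℝ) / ((A.card : ℝ) * (B.card : ℝ))

/-- The pair `(V_i, V_j)` of `G` is `(ε, λ)`-lower-regular. -/
def LowerRegularPair (ε lam : ℝ) (G : SimpleGraph (Fin k × Fin n)) (i j : Fin k) : Prop :=
  ∀ A B : Finset (Fin n), ε * n ≤ (A.card : ℝ) → ε * n ≤ (B.card : ℝ) →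
    lam * density G i j Finset.univ Finset.univ ≤ density G i j A B

/-- The pair `(V_i, V_j)` of `G` is `(ε, δ)`-lower-regular for a function `δ`. -/
def FnLowerRegularPair (ε : ℝ) (δ : ℝ → ℝ) (G : SimpleGraph (Fin k × Fin n)) (i j : Fin k) :
    Prop :=
  ∀ A B : Finset (Fin n), ε * n ≤ (A.card : ℝ) → ε * n ≤ (B.card : ℝ) →
    δ (min (A.card : ℝ) (B.card : ℝ) / n) * density G i j Finset.univ Finset.univ
      < density G i j A B

/-- `G` is a subgraph of `K_n^H`: edges only between classes `V_i, V_j` with `ij ∈ E(H)`. -/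
def IsSubgraphKnH (H : SimpleGraph (Fin k)) (G : SimpleGraph (Fin k × Fin n)) : Prop :=
  ∀ ⦃x y : Fin k × Fin n⦄, G.Adj x y → H.Adj x.1 y.1

/-- `G ∈ 𝒢(H, n, m)`: a subgraph of `K_n^H` with exactly `m` edges between `V_i` and `V_j`
for each edge `ij` of `H`. -/
def MemFamily (H : SimpleGraph (Fin k)) (m : ℕ) (G : SimpleGraph (Fin k × Fin n)) : Prop :=
  IsSubgraphKnH H G ∧ ∀ i j, H.Adj i j → pairCount G i j = m

/-- `f` selects a canonical copy of `H` in `G ⊆ K_n^H` (vertex `i` goes to `V_i`). -/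
def IsCanonicalCopy (H : SimpleGraph (Fin k)) (G : SimpleGraph (Fin k × Fin n))
    (f : Fin k → Fin n) : Prop :=
  ∀ ⦃i j⦄, H.Adj i j → G.Adj (i, f i) (j, f j)

/-- The number of canonical copies of `H` in `G ⊆ K_n^H`. -/
noncomputable def copyCount (H : SimpleGraph (Fin k)) (G : SimpleGraph (Fin k × Fin n)) : ℕ :=
  Nat.card {f : Fin k → Fin n // IsCanonicalCopy H G f}

/-- `deg_H(e, G)`: the number of canonical copies of `H` in `G` containing both coordinates
of the pair `e ∈ V_a × V_b`. -/
noncomputable def degPair (H : SimpleGraph (Fin k)) (G : SimpleGraph (Fin k × Fin n))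
    (a b : Fin k) (e : Fin n × Fin n) : ℕ :=
  Nat.card {f : Fin k → Fin n // IsCanonicalCopy H G f ∧ f a = e.1 ∧ f b = e.2}

/-- The number of edges of a graph. -/
noncomputable def edgeCount (H : SimpleGraph (Fin k)) : ℕ := Nat.card H.edgeSet

/-- The 2-density `m₂(H) = max{(e(H')-1)/(v(H')-2) : H' ⊆ H, v(H') > 2}`, where a subgraph
is given by a vertex set `V'` and an edge subgraph `H'` with all edges inside `V'`. -/
noncomputable def twoDensity (H : SimpleGraph (Fin k)) : ℝ :=
  sSup {q : ℝ | ∃ (V' : Finset (Fin k)) (H' : SimpleGraph (Fin k)),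
    H' ≤ H ∧ (∀ ⦃x y⦄, H'.Adj x y → x ∈ V' ∧ y ∈ V') ∧ 2 < V'.card ∧
    q = ((edgeCount H' : ℝ) - 1) / ((V'.card : ℝ) - 2)}

/-!
Colour the edges of one bipartite graph `G(V_i, V_j)` uniformly at random, using each of the `r`
colours on exactly `m'` edges. Avoiding a colour on one edge makes it harder to avoid it on further
edges, so the number of edges of a given colour between `A ⊆ V_i` and `B ⊆ V_j` satisfies the same
Chernoff bound as a binomial variable. For `A`, `B` of size at least `ε n` its mean `μ` is at least
`λ ε² m'`, and it falls below `x μ` with probability at most `exp (-klFun x * μ)`, where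
`klFun x = x log x + 1 - x`. For `m' > C n` this beats the union bound over the colours and the at
most `4 ^ n` pairs `(A, B)`, so almost all colourings split the bipartite graph into lower-regular
parts. Colourings chosen independently for the edges `ij` of `H` glue to partitions of `G`.
-/

open InformationTheory (klFun klFun_apply klFun_eq_zero_iff klFun_nonneg)

lemma filter_eq_subset_compl {α ι : Type*} [Fintype α] [DecidableEq α] [DecidableEq ι] {t : ι}
    {U : Finset α} {f : α → ι} (h : ∀ u ∈ U, f u ≠ t) : ({a | f a = t} : Finset α) ⊆ Uᶜ :=
  fun a ha ↦ mem_compl.2 fun haU ↦ h a haU ((mem_filter_univ a).1 ha)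

section SizedColorings

variable {α ι : Type*} [Fintype α] [DecidableEq α] [Fintype ι] [DecidableEq ι]

/-- The colourings of `α` in which every colour `t` is used exactly `c t` times. With the uniform
distribution, this is the random ordered partition of `α` into parts of prescribed sizes;
probabilities and expectations are written as counts and sums over this set. -/
def sizedColorings (α : Type*) [Fintype α] [DecidableEq α] (c : ι → ℕ) : Finset (α → ι) :=
  {f | ∀ t, #{a | f a = t} = c t}

lemma mem_sizedColorings {c : ι → ℕ} {f : α → ι} :
    f ∈ sizedColorings α c ↔ ∀ t, #{a | f a = t} = c t := by
  simp [sizedColorings]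

lemma comp_perm_mem_sizedColorings {c : ι → ℕ} {f : α → ι} (hf : f ∈ sizedColorings α c)
    (σ : Equiv.Perm α) : f ∘ σ ∈ sizedColorings α c := by
  rw [mem_sizedColorings] at hf ⊢
  exact fun t ↦ (card_equiv σ (by simp)).trans (hf t)

lemma exists_perm_comp_eq_of_mem_sizedColorings {c : ι → ℕ} {f g : α → ι}
    (hf : f ∈ sizedColorings α c) (hg : g ∈ sizedColorings α c) :
    ∃ σ : Equiv.Perm α, f ∘ σ = g := by
  rw [mem_sizedColorings] at hf hg
  have fiberEquiv (t : ι) : Nonempty ({a // g a = t} ≃ {a // f a = t}) :=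
    Fintype.card_eq.1 (by rw [Fintype.card_subtype, Fintype.card_subtype, hf, hg])
  exact ⟨Equiv.ofFiberEquiv fun t ↦ (fiberEquiv t).some, funext (Equiv.ofFiberEquiv_map _)⟩

lemma sizedColorings_nonempty {c : ι → ℕ} (hc : ∑ t, c t = Fintype.card α) :
    (sizedColorings α c).Nonempty := by
  let e : α ≃ Σ t, Fin (c t) := Fintype.equivOfCardEq (by simp [hc])
  refine ⟨fun a ↦ (e a).1, mem_sizedColorings.2 fun t ↦ ?_⟩
  calc #{a | (e a).1 = t} = Fintype.card {x : Σ t, Fin (c t) // x.1 = t} := by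
        rw [Fintype.card_subtype]
        exact card_equiv e (by simp)
    _ = c t := (Fintype.card_congr (Equiv.sigmaSubtype t)).trans (Fintype.card_fin _)

lemma card_sizedColorings_mul_prod_factorial {c : ι → ℕ} (hc : ∑ t, c t = Fintype.card α) :
    #(sizedColorings α c) * ∏ t, (c t).factorial = (Fintype.card α).factorial := by
  obtain ⟨f₀, hf₀⟩ := sizedColorings_nonempty hc
  have card_stabilizer : #{σ : Equiv.Perm α | f₀ ∘ σ = f₀} = ∏ t, (c t).factorial := by
    rw [← Fintype.card_subtype, DomMulAct.stabilizer_card]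
    simp_rw [Fintype.card_subtype, mem_sizedColorings.1 hf₀]
  have card_fiber (f : α → ι) (hf : f ∈ sizedColorings α c) :
      #{σ : Equiv.Perm α | f₀ ∘ σ = f} = ∏ t, (c t).factorial := by
    obtain ⟨σ₀, rfl⟩ := exists_perm_comp_eq_of_mem_sizedColorings hf₀ hf
    rw [← card_stabilizer]
    refine card_equiv (Equiv.mulRight σ₀⁻¹) fun σ ↦ ?_
    simp [← Function.comp_assoc, Equiv.Perm.coe_mul, Equiv.comp_symm_eq, Equiv.Perm.inv_def]
  rw [← Fintype.card_perm, ← card_univ,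
    card_eq_sum_card_fiberwise fun σ _ ↦ comp_perm_mem_sizedColorings hf₀ σ,
    sum_congr rfl card_fiber, sum_const, smul_eq_mul]

lemma card_sizedColorings_const {m : ℕ} (h : Fintype.card α = Fintype.card ι * m) :
    (#(sizedColorings α fun _ : ι ↦ m) : ℝ) =
      (Fintype.card ι * m).factorial / m.factorial ^ Fintype.card ι := by
  rw [eq_div_iff (by positivity)]
  exact_mod_cast by
    simpa [h] using
      card_sizedColorings_mul_prod_factorial (α := α) (c := fun _ : ι ↦ m) (by simp [h])

/-- The colourings in `sizedColorings α c` that do not use the colour `t` on `U`. -/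
def avoidingColorings (c : ι → ℕ) (t : ι) (U : Finset α) : Finset (α → ι) :=
  {f ∈ sizedColorings α c | ∀ u ∈ U, f u ≠ t}

lemma mem_avoidingColorings {c : ι → ℕ} {t : ι} {U : Finset α} {f : α → ι} :
    f ∈ avoidingColorings c t U ↔ f ∈ sizedColorings α c ∧ ∀ u ∈ U, f u ≠ t := by
  simp [avoidingColorings]

lemma avoidingColorings_insert (c : ι → ℕ) (t : ι) (U : Finset α) (a : α) :
    avoidingColorings c t (insert a U) = {f ∈ avoidingColorings c t U | f a ≠ t} := by
  ext f
  simp only [mem_avoidingColorings, mem_filter, forall_mem_insert]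
  tauto

lemma card_avoidingColorings_insert_eq (c : ι → ℕ) (t : ι) {U : Finset α} {a b : α}
    (ha : a ∉ U) (hb : b ∉ U) :
    #(avoidingColorings c t (insert a U)) = #(avoidingColorings c t (insert b U)) := by
  have swap_mem {a b : α} (ha : a ∉ U) (hb : b ∉ U) {f : α → ι}
      (hf : f ∈ avoidingColorings c t (insert a U)) :
      f ∘ Equiv.swap a b ∈ avoidingColorings c t (insert b U) := by
    rw [mem_avoidingColorings, forall_mem_insert] at hf ⊢
    refine ⟨comp_perm_mem_sizedColorings hf.1 _, by simpa using hf.2.1, fun u hu ↦ ?_⟩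
    rw [Function.comp_apply, Equiv.swap_apply_of_ne_of_ne (ne_of_mem_of_not_mem hu ha)
      (ne_of_mem_of_not_mem hu hb)]
    exact hf.2.2 u hu
  have comp_swap_le {a b : α} (ha : a ∉ U) (hb : b ∉ U) :
      #(avoidingColorings c t (insert a U)) ≤ #(avoidingColorings c t (insert b U)) :=
    card_le_card_of_injOn (· ∘ Equiv.swap a b) (fun _ hf ↦ swap_mem ha hb hf)
      (Equiv.surjective _).injective_comp_right.injOn
  exact (comp_swap_le ha hb).antisymm (comp_swap_le hb ha)

/- Double count the pairs `(f, b)` with `b ∉ U` such that `f` avoids `t` on `insert b U`. -/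
lemma card_compl_mul_card_avoidingColorings_insert (c : ι → ℕ) (t : ι) {U : Finset α} {a : α}
    (ha : a ∉ U) :
    #Uᶜ * #(avoidingColorings c t (insert a U)) = (#Uᶜ - c t) * #(avoidingColorings c t U) := by
  have card_above (b : α) (hb : b ∈ Uᶜ) :
      #(bipartiteAbove (fun b (f : α → ι) ↦ f b ≠ t) (avoidingColorings c t U) b) =
        #(avoidingColorings c t (insert a U)) := by
    rw [bipartiteAbove, ← avoidingColorings_insert]
    exact card_avoidingColorings_insert_eq c t (mem_compl.1 hb) ha
  have card_below (f : α → ι) (hf : f ∈ avoidingColorings c t U) :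
      #(bipartiteBelow (fun b (f : α → ι) ↦ f b ≠ t) Uᶜ f) = #Uᶜ - c t := by
    obtain ⟨hsize, havoid⟩ := mem_avoidingColorings.1 hf
    rw [← mem_sizedColorings.1 hsize t, ← card_sdiff_of_subset (filter_eq_subset_compl havoid)]
    congr 1
    ext b
    simp [bipartiteBelow]
  exact card_mul_eq_card_mul (fun b (f : α → ι) ↦ f b ≠ t) card_above card_below |>.trans
    (mul_comm _ _)

lemma card_avoidingColorings_insert_le (c : ι → ℕ) (t : ι) {U : Finset α} {a : α} (ha : a ∉ U) :
    (#(avoidingColorings c t (insert a U)) : ℝ) ≤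
      (1 - c t / Fintype.card α) * #(avoidingColorings c t U) := by
  obtain hempty | ⟨f, hf⟩ := (avoidingColorings c t U).eq_empty_or_nonempty
  · simp [avoidingColorings_insert, hempty]
  have hle : c t ≤ #Uᶜ := by
    obtain ⟨hsize, havoid⟩ := mem_avoidingColorings.1 hf
    exact mem_sizedColorings.1 hsize t ▸ card_le_card (filter_eq_subset_compl havoid)
  have hpos : (0 : ℝ) < #Uᶜ := by exact_mod_cast card_pos.2 ⟨a, mem_compl.2 ha⟩
  have hcount : (#Uᶜ : ℝ) * #(avoidingColorings c t (insert a U)) =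
      (#Uᶜ - c t) * #(avoidingColorings c t U) := by
    rw [← Nat.cast_sub hle]
    exact_mod_cast card_compl_mul_card_avoidingColorings_insert c t ha
  calc (#(avoidingColorings c t (insert a U)) : ℝ)
      = (1 - c t / #Uᶜ) * #(avoidingColorings c t U) := by
        field_simp
        linarith
    _ ≤ (1 - c t / Fintype.card α) * #(avoidingColorings c t U) := by
        gcongr
        exact card_le_univ _

lemma card_avoidingColorings_le {c : ι → ℕ} {t : ι} (hct : c t ≤ Fintype.card α) (U : Finset α) :
    (#(avoidingColorings c t U) : ℝ) ≤
      (1 - c t / Fintype.card α) ^ #U * #(sizedColorings α c) := by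
  have one_sub_nonneg : (0 : ℝ) ≤ 1 - c t / Fintype.card α :=
    sub_nonneg.2 (div_le_one_of_le₀ (by exact_mod_cast hct) (Nat.cast_nonneg _))
  induction U using Finset.induction_on with
  | empty => simp [avoidingColorings]
  | insert a U ha ih =>
    rw [card_insert_of_notMem ha, pow_succ', mul_assoc]
    exact (card_avoidingColorings_insert_le c t ha).trans (by gcongr)

/-- The expected number of elements of `S` that receive the colour `t` in a uniformly random
member of `sizedColorings α c`. -/
noncomputable def meanCount (c : ι → ℕ) (t : ι) (S : Finset α) : ℝ :=
  c t * #S / Fintype.card α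

/- Expand `x ^ #{a ∈ S | f a = t} = ∏ a ∈ S, ((if f a ≠ t then 1 - x else 0) + x)`. -/
lemma sum_pow_card_filter_eq (c : ι → ℕ) (t : ι) (S : Finset α) (x : ℝ) :
    ∑ f ∈ sizedColorings α c, x ^ #{a ∈ S | f a = t} =
      ∑ U ∈ S.powerset, (1 - x) ^ #U * x ^ (#S - #U) * #(avoidingColorings c t U) := by
  have pow_eq (f : α → ι) : x ^ #{a ∈ S | f a = t} =
      ∑ U ∈ S.powerset, if ∀ u ∈ U, f u ≠ t then (1 - x) ^ #U * x ^ (#S - #U) else 0 := by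
    calc x ^ #{a ∈ S | f a = t} = ∏ a ∈ S, ((if f a ≠ t then 1 - x else 0) + x) := by
          rw [← prod_const, prod_filter]
          refine prod_congr rfl fun a _ ↦ ?_
          by_cases h : f a = t <;> simp [h]
      _ = _ := by
          rw [prod_add]
          refine sum_congr rfl fun U hU ↦ ?_
          rw [prod_ite_zero, prod_const, prod_const, card_sdiff_of_subset (mem_powerset.1 hU),
            ite_mul, zero_mul]
          congr
  simp_rw [pow_eq]
  rw [sum_comm]
  refine sum_congr rfl fun U _ ↦ ?_
  rw [← sum_filter, sum_const, nsmul_eq_mul, mul_comm]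
  rfl

lemma sum_pow_card_filter_le {c : ι → ℕ} {t : ι} (hct : c t ≤ Fintype.card α) (S : Finset α)
    {x : ℝ} (hx₀ : 0 ≤ x) (hx₁ : x ≤ 1) :
    ∑ f ∈ sizedColorings α c, x ^ #{a ∈ S | f a = t} ≤
      Real.exp (-((1 - x) * meanCount c t S)) * #(sizedColorings α c) := by
  have : 0 ≤ 1 - x := sub_nonneg.2 hx₁
  set p : ℝ := c t / Fintype.card α with hp
  have hp₁ : p ≤ 1 := div_le_one_of_le₀ (by exact_mod_cast hct) (Nat.cast_nonneg _)
  calc ∑ f ∈ sizedColorings α c, x ^ #{a ∈ S | f a = t}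
      = ∑ U ∈ S.powerset, (1 - x) ^ #U * x ^ (#S - #U) * #(avoidingColorings c t U) :=
        sum_pow_card_filter_eq c t S x
    _ ≤ ∑ U ∈ S.powerset,
          (1 - x) ^ #U * x ^ (#S - #U) * ((1 - p) ^ #U * #(sizedColorings α c)) := by
        gcongr
        exact card_avoidingColorings_le hct _
    _ = (1 - (1 - x) * p) ^ #S * #(sizedColorings α c) := by
        rw [show 1 - (1 - x) * p = (1 - x) * (1 - p) + x by ring, ← sum_pow_mul_eq_add_pow, sum_mul]
        refine sum_congr rfl fun U _ ↦ ?_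
        rw [mul_pow]
        ring
    _ ≤ Real.exp (-((1 - x) * p)) ^ #S * #(sizedColorings α c) := by
        gcongr
        · nlinarith
        · exact Real.one_sub_le_exp_neg _
    _ = Real.exp (-((1 - x) * meanCount c t S)) * #(sizedColorings α c) := by
        rw [← Real.exp_nat_mul, meanCount, hp]
        ring_nf

/- Chernoff's bound: apply Markov's inequality to `x ^ #{a ∈ S | f a = t}`. -/
lemma card_filter_lt_mul_meanCount_le {c : ι → ℕ} {t : ι} (hct : c t ≤ Fintype.card α)
    (S : Finset α) {x : ℝ} (hx₀ : 0 < x) (hx₁ : x ≤ 1) :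
    (#{f ∈ sizedColorings α c | (#{a ∈ S | f a = t} : ℝ) < x * meanCount c t S} : ℝ) ≤
      Real.exp (-(klFun x * meanCount c t S)) * #(sizedColorings α c) := by
  set μ := meanCount c t S
  set bad := {f ∈ sizedColorings α c | (#{a ∈ S | f a = t} : ℝ) < x * μ}
  have markov : #bad * x ^ (x * μ) ≤
      Real.exp (-((1 - x) * μ)) * #(sizedColorings α c) := by
    calc #bad * x ^ (x * μ) = ∑ _ ∈ bad, x ^ (x * μ) := by simp
      _ ≤ ∑ f ∈ bad, x ^ #{a ∈ S | f a = t} := by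
          refine sum_le_sum fun f hf ↦ ?_
          rw [← Real.rpow_natCast]
          exact Real.rpow_le_rpow_of_exponent_ge hx₀ hx₁ (mem_filter.1 hf).2.le
      _ ≤ ∑ f ∈ sizedColorings α c, x ^ #{a ∈ S | f a = t} :=
          sum_le_sum_of_subset_of_nonneg (filter_subset _ _) fun _ _ _ ↦ by positivity
      _ ≤ _ := sum_pow_card_filter_le hct S hx₀.le hx₁
  have exp_eq : Real.exp (-((1 - x) * μ)) = Real.exp (-(klFun x * μ)) * x ^ (x * μ) := by
    rw [Real.rpow_def_of_pos hx₀, ← Real.exp_add, klFun_apply]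
    ring_nf
  rw [exp_eq, mul_right_comm] at markov
  exact le_of_mul_le_mul_right markov (by positivity)

lemma le_card_filter_forall_mul_meanCount_le {κ : Type*} {c : ι → ℕ}
    (hc : ∀ t, c t ≤ Fintype.card α) (K : Finset κ) (S : κ → Finset α) {μ x : ℝ}
    (hμ : ∀ s ∈ K, ∀ t, μ ≤ meanCount c t (S s)) (hx₀ : 0 < x) (hx₁ : x ≤ 1) :
    (1 - Fintype.card ι * #K * Real.exp (-(klFun x * μ))) * #(sizedColorings α c) ≤
      #{f ∈ sizedColorings α c |
        ∀ s ∈ K, ∀ t, x * meanCount c t (S s) ≤ #{a ∈ S s | f a = t}} := by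
  set all := sizedColorings α c
  set good := {f ∈ all | ∀ s ∈ K, ∀ t, x * meanCount c t (S s) ≤ #{a ∈ S s | f a = t}}
  let bad (st : κ × ι) : Finset (α → ι) :=
    {f ∈ all | (#{a ∈ S st.1 | f a = st.2} : ℝ) < x * meanCount c st.2 (S st.1)}
  have all_subset : all ⊆ good ∪ (K ×ˢ univ).biUnion bad := by
    intro f hf
    simp only [mem_union, mem_biUnion, mem_product, mem_univ, and_true, Prod.exists, good, bad,
      mem_filter, hf, true_and]
    by_contra! h
    obtain ⟨⟨s, hs, t, hlt⟩, hle⟩ := h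
    exact (hle s t hs).not_gt hlt
  have card_bad_le (st : κ × ι) (hst : st ∈ K ×ˢ univ) :
      (#(bad st) : ℝ) ≤ Real.exp (-(klFun x * μ)) * #all := by
    refine (card_filter_lt_mul_meanCount_le (hc st.2) (S st.1) hx₀ hx₁).trans ?_
    have := klFun_nonneg hx₀.le
    gcongr
    exact hμ st.1 (mem_product.1 hst).1 st.2
  have card_all_le : (#all : ℝ) ≤ #good + ∑ st ∈ K ×ˢ univ, (#(bad st) : ℝ) := by
    exact_mod_cast (card_le_card all_subset).trans <|
      (card_union_le _ _).trans (Nat.add_le_add_left card_biUnion_le _)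
  have sum_bad_le := sum_le_card_nsmul _ _ _ card_bad_le
  rw [card_product, card_univ, nsmul_eq_mul, Nat.cast_mul] at sum_bad_le
  linarith

end SizedColorings

section OrientedEdges

variable {V : Type*} [LinearOrder V] {H : SimpleGraph V}

/-- The edges `ij` of `H` with `i < j`, as ordered pairs: a choice of one orientation of each
edge. -/
abbrev OrientedEdge (H : SimpleGraph V) := {p : V × V // p.1 < p.2 ∧ H.Adj p.1 p.2}

lemma forall_adj_of_forall_orientedEdge {P : V → V → Prop} (symm : ∀ i j, P i j → P j i)
    (h : ∀ p : OrientedEdge H, P p.1.1 p.1.2) (i j : V) (hij : H.Adj i j) : P i j := by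
  rcases hij.ne.lt_or_gt with hlt | hgt
  · exact h ⟨(i, j), hlt, hij⟩
  · exact symm j i (h ⟨(j, i), hgt, hij.symm⟩)

lemma card_orientedEdge (H : SimpleGraph V) : Nat.card (OrientedEdge H) = Nat.card H.edgeSet := by
  refine Nat.card_eq_of_bijective
    (fun p : OrientedEdge H ↦ (⟨s(p.1.1, p.1.2), p.2.2⟩ : H.edgeSet)) ⟨?_, ?_⟩
  · rintro ⟨⟨a, b⟩, hab, _⟩ ⟨⟨c, d⟩, hcd, _⟩ h
    rcases Sym2.eq_iff.1 (congrArg Subtype.val h) with ⟨rfl, rfl⟩ | ⟨rfl, rfl⟩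
    · rfl
    · exact absurd hab hcd.asymm
  · rintro ⟨⟨i, j⟩, hij⟩
    exact forall_adj_of_forall_orientedEdge
      (P := fun i j ↦ ∀ h : H.Adj i j, ∃ p : OrientedEdge H, ⟨s(p.1.1, p.1.2), p.2.2⟩ =
        (⟨s(i, j), h⟩ : H.edgeSet))
      (fun i j h hji ↦ by simpa only [Sym2.eq_swap] using h hji.symm)
      (fun p _ ↦ ⟨p, rfl⟩) i j hij hij

end OrientedEdges

section Pairs

variable {G : SimpleGraph (Fin k × Fin n)} {i j : Fin k} {ε lam : ℝ}

lemma pairCountIn_comm (G : SimpleGraph (Fin k × Fin n)) (i j : Fin k) (A B : Finset (Fin n)) :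
    pairCountIn G i j A B = pairCountIn G j i B A :=
  Nat.card_congr <| (Equiv.prodComm _ _).subtypeEquiv fun _ ↦ by
    simp only [Equiv.prodComm_apply, Prod.fst_swap, Prod.snd_swap, G.adj_comm (j, _)]
    tauto

lemma pairCountIn_univ_univ (G : SimpleGraph (Fin k × Fin n)) (i j : Fin k) :
    pairCountIn G i j univ univ = pairCount G i j := by
  simp [pairCountIn, pairCount]

lemma pairCount_comm (G : SimpleGraph (Fin k × Fin n)) (i j : Fin k) :
    pairCount G i j = pairCount G j i := by
  rw [← pairCountIn_univ_univ, pairCountIn_comm, pairCountIn_univ_univ]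

lemma density_comm (G : SimpleGraph (Fin k × Fin n)) (i j : Fin k) (A B : Finset (Fin n)) :
    density G i j A B = density G j i B A := by
  rw [density, density, pairCountIn_comm, mul_comm (#A : ℝ)]

lemma LowerRegularPair.symm (h : LowerRegularPair ε lam G i j) : LowerRegularPair ε lam G j i := by
  intro A B hA hB
  rw [density_comm G j i A, density_comm G j i univ]
  exact h B A hB hA

lemma lowerRegularPair_iff (hε : 0 < ε) (hn : 0 < n) :
    LowerRegularPair ε lam G i j ↔ ∀ A B : Finset (Fin n), ε * n ≤ #A → ε * n ≤ #B →
      lam * pairCount G i j / (n * n) * (#A * #B) ≤ pairCountIn G i j A B := by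
  have hεn : 0 < ε * n := by positivity
  refine forall₄_congr fun A B hA hB ↦ ?_
  rw [density, density, le_div_iff₀ (mul_pos (hεn.trans_le hA) (hεn.trans_le hB)),
    pairCountIn_univ_univ, card_univ, Fintype.card_fin, mul_div_assoc]

end Pairs

section RegularColorings

variable {G : SimpleGraph (Fin k × Fin n)} {i j : Fin k} {ε lam lam' : ℝ}
  {ι : Type*}

/-- The edges of the bipartite graph `G(V_i, V_j)`. -/
abbrev EdgesBetween (G : SimpleGraph (Fin k × Fin n)) (i j : Fin k) :=
  {q : Fin n × Fin n // G.Adj (i, q.1) (j, q.2)}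

lemma natCard_subtype_eq_card_filter {α : Type*} {P Q : α → Prop} [Fintype {a // P a}]
    {R : {a // P a} → Prop} [DecidablePred R] (h : ∀ a, Q a ↔ ∃ ha : P a, R ⟨a, ha⟩) :
    Nat.card {a // Q a} = #{x | R x} := by
  rw [← Fintype.card_subtype, ← Nat.card_eq_fintype_card]
  exact Nat.card_congr <| (Equiv.subtypeEquivRight h).trans
    (Equiv.subtypeSubtypeEquivSubtypeExists _ R).symm

variable [DecidableRel G.Adj]

/-- The edges of the bipartite graph `G(V_i, V_j)` between `A ⊆ V_i` and `B ⊆ V_j`. -/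
def edgesWithin (G : SimpleGraph (Fin k × Fin n)) [DecidableRel G.Adj] (i j : Fin k)
    (A B : Finset (Fin n)) : Finset (EdgesBetween G i j) :=
  {q | q.1.1 ∈ A ∧ q.1.2 ∈ B}

lemma card_edgesBetween : Fintype.card (EdgesBetween G i j) = pairCount G i j :=
  Nat.card_eq_fintype_card.symm

lemma card_edgesWithin (A B : Finset (Fin n)) :
    #(edgesWithin G i j A B) = pairCountIn G i j A B :=
  (natCard_subtype_eq_card_filter fun q ↦ by
    simp only [exists_prop]
    tauto).symm

lemma le_meanCount_edgesWithin (hε : 0 < ε) (hn : 0 < n) (hreg : LowerRegularPair ε lam G i j)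
    {c : ι → ℕ} {t : ι} (hct : c t ≤ pairCount G i j) {A B : Finset (Fin n)}
    (hA : ε * n ≤ #A) (hB : ε * n ≤ #B) :
    lam * c t / (n * n) * (#A * #B) ≤ meanCount c t (edgesWithin G i j A B) := by
  rw [meanCount, card_edgesBetween, card_edgesWithin]
  obtain h0 | hpos := (pairCount G i j).eq_zero_or_pos
  · simp [Nat.le_zero.1 (h0 ▸ hct)]
  rw [le_div_iff₀ (by exact_mod_cast hpos)]
  calc lam * c t / (n * n) * (#A * #B) * pairCount G i j
      = c t * (lam * pairCount G i j / (n * n) * (#A * #B)) := by ring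
    _ ≤ c t * pairCountIn G i j A B := by
        gcongr
        exact (lowerRegularPair_iff hε hn).1 hreg A B hA hB

lemma le_meanCount_edgesWithin_of_pos (hε : 0 < ε) (hn : 0 < n) (hlam : 0 < lam)
    (hreg : LowerRegularPair ε lam G i j) {c : ι → ℕ} {t : ι} (hct : c t ≤ pairCount G i j)
    {A B : Finset (Fin n)} (hA : ε * n ≤ #A) (hB : ε * n ≤ #B) :
    lam * ε ^ 2 * c t ≤ meanCount c t (edgesWithin G i j A B) :=
  calc lam * ε ^ 2 * c t = lam * c t / (n * n) * ((ε * n) * (ε * n)) := by field_simp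
    _ ≤ lam * c t / (n * n) * (#A * #B) := by gcongr
    _ ≤ _ := le_meanCount_edgesWithin hε hn hreg hct hA hB

variable [Fintype ι] [DecidableEq ι]

variable (G i j ε lam ι) in
/-- The ordered partitions of `G(V_i, V_j)` into `(ε, lam)`-lower-regular bipartite graphs with `m'`
edges, encoded as colourings of its edges by the index of the part. -/
noncomputable def regularColorings (m' : ℕ) : Finset (EdgesBetween G i j → ι) :=
  {f ∈ sizedColorings (EdgesBetween G i j) fun _ ↦ m' |
    ∀ A B : Finset (Fin n), ε * n ≤ #A → ε * n ≤ #B → ∀ t,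
      lam * m' / (n * n) * (#A * #B) ≤ #{q ∈ edgesWithin G i j A B | f q = t}}

lemma mem_regularColorings {m' : ℕ} {f : EdgesBetween G i j → ι} :
    f ∈ regularColorings G i j ε lam ι m' ↔
      f ∈ sizedColorings (EdgesBetween G i j) (fun _ ↦ m') ∧
        ∀ A B : Finset (Fin n), ε * n ≤ #A → ε * n ≤ #B → ∀ t,
          lam * m' / (n * n) * (#A * #B) ≤ #{q ∈ edgesWithin G i j A B | f q = t} := by
  simp [regularColorings]

lemma le_card_regularColorings (hε : 0 < ε) (hn : 0 < n) (hlam' : 0 < lam') (hle : lam' ≤ lam)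
    {m' : ℕ} (hcount : pairCount G i j = Fintype.card ι * m')
    (hreg : LowerRegularPair ε lam G i j) :
    (1 - Fintype.card ι * 4 ^ n * Real.exp (-(klFun (lam' / lam) * (lam * ε ^ 2 * m')))) *
        ((Fintype.card ι * m').factorial / m'.factorial ^ Fintype.card ι) ≤
      #(regularColorings G i j ε lam' ι m') := by
  have hlam : 0 < lam := hlam'.trans_le hle
  have hm' (t : ι) : m' ≤ pairCount G i j :=
    hcount ▸ Nat.le_mul_of_pos_left _ (Fintype.card_pos_iff.2 ⟨t⟩)
  let K : Finset (Finset (Fin n) × Finset (Fin n)) := {AB | ε * n ≤ #AB.1 ∧ ε * n ≤ #AB.2}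
  have card_K_le : (#K : ℝ) ≤ 4 ^ n := by
    have : #K ≤ 2 ^ n * 2 ^ n := (card_le_univ K).trans_eq (by simp)
    rw [← mul_pow] at this
    exact_mod_cast this
  have mean_ge (AB) (hAB : AB ∈ K) (t : ι) :
      lam * ε ^ 2 * m' ≤ meanCount (fun _ ↦ m') t (edgesWithin G i j AB.1 AB.2) :=
    have ⟨hA, hB⟩ := (mem_filter_univ _).1 hAB
    le_meanCount_edgesWithin_of_pos (c := fun _ ↦ m') hε hn hlam hreg (hm' t) hA hB
  rw [← card_sizedColorings_const (card_edgesBetween.trans hcount)]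
  refine le_trans ?_ <| (le_card_filter_forall_mul_meanCount_le
    (fun t ↦ (hm' t).trans_eq card_edgesBetween.symm) K _ mean_ge (div_pos hlam' hlam)
    (div_le_one_of_le₀ hle hlam.le)).trans ?_
  · gcongr
  · refine Nat.cast_le.2 (card_le_card fun f hf ↦ ?_)
    simp only [mem_filter] at hf
    obtain ⟨hsize, hlower⟩ := hf
    refine mem_regularColorings.2 ⟨hsize, fun A B hA hB t ↦ ?_⟩
    have hAB : (A, B) ∈ K := (mem_filter_univ _).2 ⟨hA, hB⟩
    calc lam' * m' / (n * n) * (#A * #B)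
        = lam' / lam * (lam * m' / (n * n) * (#A * #B)) := by field_simp
      _ ≤ lam' / lam * meanCount (fun _ ↦ m') t (edgesWithin G i j A B) := by
          gcongr
          exact le_meanCount_edgesWithin (c := fun _ ↦ m') hε hn hreg (hm' t) hA hB
      _ ≤ _ := hlower _ hAB t

end RegularColorings

section Gluing

variable {H : SimpleGraph (Fin k)} {G : SimpleGraph (Fin k × Fin n)} {ι : Type*}

/-- The edges of `G ⊆ K_n^H` correspond to the edges of its bipartite graphs `G(V_i, V_j)`, where
`ij` runs over the oriented edges of `H`. -/
noncomputable def edgesBetweenEquiv (hG : IsSubgraphKnH H G) :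
    (Σ p : OrientedEdge H, EdgesBetween G p.1.1 p.1.2) ≃ G.edgeSet :=
  Equiv.ofBijective (fun x ↦ ⟨s((x.1.1.1, x.2.1.1), (x.1.1.2, x.2.1.2)), x.2.2⟩) <| by
    constructor
    · rintro ⟨⟨⟨i, j⟩, hij, _⟩, ⟨u, v⟩, _⟩ ⟨⟨⟨i', j'⟩, hij', _⟩, ⟨u', v'⟩, _⟩ h
      rcases Sym2.eq_iff.1 (congrArg Subtype.val h) with ⟨h₁, h₂⟩ | ⟨h₁, h₂⟩
      · cases h₁
        cases h₂
        rfl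
      · cases h₁
        cases h₂
        exact absurd hij hij'.asymm
    · rintro ⟨⟨⟨i, u⟩, ⟨j, v⟩⟩, h⟩
      rcases (hG h).ne.lt_or_gt with hlt | hgt
      · exact ⟨⟨⟨(i, j), hlt, hG h⟩, ⟨(u, v), h⟩⟩, rfl⟩
      · exact ⟨⟨⟨(j, i), hgt, (hG h).symm⟩, ⟨(v, u), h.symm⟩⟩, Subtype.ext Sym2.eq_swap⟩

/-- The labelling of the edges of `G` obtained from one labelling of each `G(V_i, V_j)`. -/
noncomputable def glue (hG : IsSubgraphKnH H G)
    (F : ∀ p : OrientedEdge H, EdgesBetween G p.1.1 p.1.2 → ι) : G.EdgeLabeling ι :=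
  fun e ↦ F ((edgesBetweenEquiv hG).symm e).1 ((edgesBetweenEquiv hG).symm e).2

lemma labelGraph_glue_adj (hG : IsSubgraphKnH H G)
    (F : ∀ p : OrientedEdge H, EdgesBetween G p.1.1 p.1.2 → ι) (t : ι) (p : OrientedEdge H)
    (q : Fin n × Fin n) :
    ((glue hG F).labelGraph t).Adj (p.1.1, q.1) (p.1.2, q.2) ↔
      ∃ h : G.Adj (p.1.1, q.1) (p.1.2, q.2), F p ⟨q, h⟩ = t := by
  have glue_eq (h : G.Adj (p.1.1, q.1) (p.1.2, q.2)) :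
      glue hG F ⟨s((p.1.1, q.1), (p.1.2, q.2)), h⟩ = F p ⟨q, h⟩ := by
    have hsymm : (edgesBetweenEquiv hG).symm ⟨s((p.1.1, q.1), (p.1.2, q.2)), h⟩ =
        ⟨p, ⟨q, h⟩⟩ := (Equiv.symm_apply_eq _).2 rfl
    rw [glue, hsymm]
  simp_rw [SimpleGraph.EdgeLabeling.labelGraph_adj, glue_eq]

lemma labelGraph_glue_injective (hG : IsSubgraphKnH H G) :
    Function.Injective fun F : ∀ p : OrientedEdge H, EdgesBetween G p.1.1 p.1.2 → ι ↦
      (glue hG F).labelGraph := by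
  intro F F' h
  funext p q
  have hadj := (labelGraph_glue_adj hG F (F p q) p q.1).2 ⟨q.2, rfl⟩
  rw [show (glue hG F).labelGraph = (glue hG F').labelGraph from h] at hadj
  obtain ⟨_, h'⟩ := (labelGraph_glue_adj hG F' (F p q) p q.1).1 hadj
  exact h'.symm

variable [DecidableRel G.Adj] [DecidableEq ι]

lemma pairCount_labelGraph_glue (hG : IsSubgraphKnH H G)
    (F : ∀ p : OrientedEdge H, EdgesBetween G p.1.1 p.1.2 → ι) (t : ι) (p : OrientedEdge H) :
    pairCount ((glue hG F).labelGraph t) p.1.1 p.1.2 = #{q | F p q = t} :=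
  natCard_subtype_eq_card_filter (labelGraph_glue_adj hG F t p)

lemma pairCountIn_labelGraph_glue (hG : IsSubgraphKnH H G)
    (F : ∀ p : OrientedEdge H, EdgesBetween G p.1.1 p.1.2 → ι) (t : ι) (p : OrientedEdge H)
    (A B : Finset (Fin n)) :
    pairCountIn ((glue hG F).labelGraph t) p.1.1 p.1.2 A B =
      #{q ∈ edgesWithin G p.1.1 p.1.2 A B | F p q = t} := by
  rw [edgesWithin, filter_filter]
  refine natCard_subtype_eq_card_filter fun q ↦ ?_
  rw [labelGraph_glue_adj hG F t p]
  tauto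

end Gluing

section RegularPartitions

variable {H : SimpleGraph (Fin k)} {G : SimpleGraph (Fin k × Fin n)} {ι : Type*}
  {ε lam lam' : ℝ} {m' : ℕ}

/-- The family `Gs` is an ordered partition of the edge set of `G` into members of
`𝒢(H, n, m', ε, lam)`. -/
def IsRegularPartition (ε lam : ℝ) (H : SimpleGraph (Fin k)) (m' : ℕ)
    (G : SimpleGraph (Fin k × Fin n)) (Gs : ι → SimpleGraph (Fin k × Fin n)) : Prop :=
  (⨆ t, Gs t) = G ∧ (∀ s t, s ≠ t → Disjoint (Gs s) (Gs t)) ∧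
    ∀ t, MemFamily H m' (Gs t) ∧ ∀ i j, H.Adj i j → LowerRegularPair ε lam (Gs t) i j

variable [Fintype ι]

lemma isRegularPartition_labelGraph_glue [DecidableRel G.Adj] [DecidableEq ι] (hε : 0 < ε)
    (hn : 0 < n) (hG : IsSubgraphKnH H G)
    {F : ∀ p : OrientedEdge H, EdgesBetween G p.1.1 p.1.2 → ι}
    (hF : ∀ p, F p ∈ regularColorings G p.1.1 p.1.2 ε lam ι m') :
    IsRegularPartition ε lam H m' G (glue hG F).labelGraph := by
  have pairCount_eq (t : ι) (p : OrientedEdge H) :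
      pairCount ((glue hG F).labelGraph t) p.1.1 p.1.2 = m' :=
    (pairCount_labelGraph_glue hG F t p).trans
      (mem_sizedColorings.1 (mem_regularColorings.1 (hF p)).1 t)
  refine ⟨(glue hG F).iSup_labelGraph,
    fun _ _ hst ↦ SimpleGraph.EdgeLabeling.pairwise_disjoint_labelGraph hst,
    fun t ↦ ⟨⟨fun x y h ↦ hG ((glue hG F).labelGraph_le h), ?_⟩, ?_⟩⟩
  · exact forall_adj_of_forall_orientedEdge (fun _ _ h ↦ (pairCount_comm _ _ _).trans h)
      (pairCount_eq t)
  · refine forall_adj_of_forall_orientedEdge (fun _ _ h ↦ h.symm) fun p ↦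
      (lowerRegularPair_iff hε hn).2 fun A B hA hB ↦ ?_
    rw [pairCount_eq, pairCountIn_labelGraph_glue]
    exact (mem_regularColorings.1 (hF p)).2 A B hA hB t

lemma prod_card_regularColorings_le [DecidableRel H.Adj] [DecidableRel G.Adj] [DecidableEq ι]
    (hε : 0 < ε) (hn : 0 < n) (hG : IsSubgraphKnH H G) :
    ∏ p : OrientedEdge H, #(regularColorings G p.1.1 p.1.2 ε lam ι m') ≤
      Nat.card {Gs : ι → SimpleGraph (Fin k × Fin n) // IsRegularPartition ε lam H m' G Gs} := by
  rw [← Fintype.card_piFinset, ← Nat.card_eq_finsetCard]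
  exact Nat.card_le_card_of_injective
    (fun F ↦ ⟨_, isRegularPartition_labelGraph_glue hε hn hG (Fintype.mem_piFinset.1 F.2)⟩)
    fun _ _ h ↦ Subtype.ext (labelGraph_glue_injective hG (congrArg Subtype.val h))

lemma pow_edgeCount_le_card_isRegularPartition (hε : 0 < ε) (hn : 0 < n) (hlam' : 0 < lam')
    (hle : lam' ≤ lam) (hG : MemFamily H (Fintype.card ι * m') G)
    (hreg : ∀ i j, H.Adj i j → LowerRegularPair ε lam G i j) {δ : ℝ} (hδ₁ : δ ≤ 1)
    (hδ : Fintype.card ι * 4 ^ n * Real.exp (-(klFun (lam' / lam) * (lam * ε ^ 2 * m'))) ≤ δ) :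
    ((1 - δ) * ((Fintype.card ι * m').factorial / m'.factorial ^ Fintype.card ι)) ^ edgeCount H ≤
      (Nat.card {Gs : ι → SimpleGraph (Fin k × Fin n) //
        IsRegularPartition ε lam' H m' G Gs} : ℝ) := by
  classical
  calc ((1 - δ) * ((Fintype.card ι * m').factorial / m'.factorial ^ Fintype.card ι)) ^ edgeCount H
      = ∏ _ : OrientedEdge H,
          (1 - δ) * ((Fintype.card ι * m').factorial / m'.factorial ^ Fintype.card ι) := by
        rw [prod_const, card_univ, edgeCount, ← card_orientedEdge, Nat.card_eq_fintype_card]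
    _ ≤ ∏ p : OrientedEdge H, (#(regularColorings G p.1.1 p.1.2 ε lam' ι m') : ℝ) := by
        refine prod_le_prod (fun _ _ ↦ mul_nonneg (sub_nonneg.2 hδ₁) (by positivity)) fun p _ ↦ ?_
        refine le_trans ?_ (le_card_regularColorings hε hn hlam' hle (hG.2 _ _ p.2.2)
          (hreg _ _ p.2.2))
        gcongr
    _ ≤ _ := by exact_mod_cast prod_card_regularColorings_le hε hn hG.1

end RegularPartitions

lemma exists_forall_mul_four_pow_mul_exp_neg_le {ρ : ℝ} (hρ : 0 < ρ) (r : ℕ) {δ : ℝ}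
    (hδ : 0 < δ) :
    ∃ C : ℝ, ∃ n₀ : ℕ, ∀ n : ℕ, n₀ ≤ n → ∀ x : ℝ, C * n < x →
      r * 4 ^ n * Real.exp (-(ρ * x)) ≤ δ := by
  have htends : Filter.Tendsto (fun n : ℕ ↦ r * (1 / 2 : ℝ) ^ n) Filter.atTop (nhds 0) := by
    simpa using (tendsto_pow_atTop_nhds_zero_of_lt_one (by norm_num) one_half_lt_one).const_mul
      (r : ℝ)
  obtain ⟨n₀, hn₀⟩ := Filter.eventually_atTop.1 (htends.eventually_le_const hδ)
  refine ⟨Real.log 8 / ρ, n₀, fun n hn x hx ↦ ?_⟩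
  have hlog : n * Real.log 8 ≤ ρ * x := by
    rw [div_mul_eq_mul_div, div_lt_iff₀ hρ] at hx
    linarith
  calc r * 4 ^ n * Real.exp (-(ρ * x)) ≤ r * 4 ^ n * Real.exp (-(n * Real.log 8)) := by gcongr
    _ = r * (1 / 2 : ℝ) ^ n := by
        rw [Real.exp_neg, Real.exp_nat_mul, Real.exp_log (by norm_num), mul_assoc, ← inv_pow,
          ← mul_pow]
        norm_num
    _ ≤ δ := hn₀ n hn

lemma exists_pos_le_one_sub_pow {η : ℝ} (hη : η < 1) (e : ℕ) :
    ∃ δ : ℝ, 0 < δ ∧ δ ≤ 1 ∧ η ≤ (1 - δ) ^ e := by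
  have htends : Filter.Tendsto (fun δ : ℝ ↦ (1 - δ) ^ e) (nhdsWithin 0 (Set.Ioi 0)) (nhds 1) := by
    refine tendsto_nhdsWithin_of_tendsto_nhds ?_
    have : Continuous fun δ : ℝ ↦ (1 - δ) ^ e := by fun_prop
    simpa using this.tendsto 0
  obtain ⟨δ, hpow, hδ₀, hδ₁⟩ := ((htends.eventually_const_le hη).and
    (Ioc_mem_nhdsGT zero_lt_one)).exists
  exact ⟨δ, hδ₀, hδ₁, hpow⟩

theorem partition_into_regular_general {ε lam lam' : ℝ} (hε : 0 < ε) (hlam' : 0 < lam')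
    (hlt : lam' < lam) {η : ℝ} (hη : η < 1) {k : ℕ} (H : SimpleGraph (Fin k)) (r : ℕ) :
    ∃ C : ℝ, ∃ n₀ : ℕ, ∀ n : ℕ, n₀ ≤ n → ∀ m m' : ℕ, m = r * m' → C * (n : ℝ) < (m' : ℝ) →
      ∀ G : SimpleGraph (Fin k × Fin n),
        MemFamily H m G → (∀ i j, H.Adj i j → LowerRegularPair ε lam G i j) →
        η * ((m.factorial : ℝ) / (m'.factorial : ℝ) ^ r) ^ edgeCount H ≤
          (Nat.card {Gs : Fin r → SimpleGraph (Fin k × Fin n) //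
            IsRegularPartition ε lam' H m' G Gs} : ℝ) := by
  have hlam : 0 < lam := hlam'.trans hlt
  have rate_pos : 0 < klFun (lam' / lam) * (lam * ε ^ 2) := by
    have klFun_ne : klFun (lam' / lam) ≠ 0 :=
      (klFun_eq_zero_iff (by positivity)).not.2 ((div_lt_one hlam).2 hlt).ne
    have := (klFun_nonneg (div_pos hlam' hlam).le).lt_of_ne' klFun_ne
    positivity
  obtain ⟨δ, hδ₀, hδ₁, hηδ⟩ := exists_pos_le_one_sub_pow hη (edgeCount H)
  obtain ⟨C, n₀, hC⟩ := exists_forall_mul_four_pow_mul_exp_neg_le rate_pos r hδ₀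
  refine ⟨C, max n₀ 1, fun n hn m m' hm hm' G hG hreg ↦ ?_⟩
  subst hm
  have failure_le : r * 4 ^ n * Real.exp (-(klFun (lam' / lam) * (lam * ε ^ 2 * m'))) ≤ δ := by
    rw [← mul_assoc (klFun _)]
    exact hC n (le_of_max_le_left hn) m' hm'
  have count_le := pow_edgeCount_le_card_isRegularPartition (ι := Fin r) hε
    (le_of_max_le_right hn) hlam' hlt.le (by rwa [Fintype.card_fin]) hreg hδ₁
    (by rwa [Fintype.card_fin])
  rw [Fintype.card_fin, mul_pow] at count_le
  refine le_trans ?_ count_le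
  gcongr

/-- **Partitioning into regular pieces (inequality (3.3)).** For all `0 < ε < 1/6`,
`λ ∈ (0,1]`, every graph `H` and positive integer `z`, there is a constant `C` such that for
all large `n`: if `m = 2z m'` with `m' > Cn`, then every `G ∈ 𝒢(H, n, m, ε, λ)` admits at
least `0.99 (m! / (m'!)^(2z))^(e(H))` ordered partitions of its edge set into edge-disjoint
graphs `(G₁, …, G_{2z})`, each with `m'` edges between `V_i` and `V_j` for every `ij ∈ E(H)`,
such that every `G_t` belongs to `𝒢(H, n, m', ε, λ/2)`. -/
theorem partition_into_regular (ε lam : ℝ) (hε : 0 < ε) (hε' : ε < 1 / 6)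
    (hlam : 0 < lam) (hlam' : lam ≤ 1)
    (k : ℕ) (H : SimpleGraph (Fin k)) (z : ℕ) (hz : 0 < z) :
    ∃ C : ℝ, ∃ n₀ : ℕ, ∀ n : ℕ, n₀ ≤ n → ∀ m m' : ℕ,
      m = 2 * z * m' → C * (n : ℝ) < (m' : ℝ) →
      ∀ G : SimpleGraph (Fin k × Fin n),
        MemFamily H m G → (∀ i j, H.Adj i j → LowerRegularPair ε lam G i j) →
        0.99 * ((m.factorial : ℝ) / ((m'.factorial : ℝ)) ^ (2 * z)) ^ edgeCount H ≤
          (Nat.card {Gs : Fin (2 * z) → SimpleGraph (Fin k × Fin n) //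
            (⨆ t, Gs t) = G ∧ (∀ s t, s ≠ t → Disjoint (Gs s) (Gs t)) ∧
            ∀ t, MemFamily H m' (Gs t) ∧
              ∀ i j, H.Adj i j → LowerRegularPair ε (lam / 2) (Gs t) i j} : ℝ) :=
  partition_into_regular_general hε (half_pos hlam) (half_lt_self hlam) (by norm_num) H (2 * z)
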